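/- If a metric space (X,d) admits a bounded, self-contracted, and unrectifiable curve γ : I → X, then for every α with 1/2 < α < 1 and every k ∈ ℕ there exists a k-point subset Y ⊆ γ(I) satisfying the SRA(α) condition. -/

import Mathlib

/-- A subset of a metric space satisfies the small rough angle condition `SRA(α)`. -/
def IsSRA {X : Type*} [MetricSpace X] (α : ℝ) (s : Set X) : Prop :=
  ∀ x ∈ s, ∀ y ∈ s, ∀ z ∈ s,
    dist x y ≤ max (dist x z + α * dist z y) (α * dist x z + dist z y)

/-- A curve `γ` defined on `I ⊆ ℝ` is self-contracted. -/
def SelfContracted {X : Type*} [MetricSpace X] (γ : ℝ → X) (I : Set ℝ) : Prop :=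
  ∀ t₁ ∈ I, ∀ t₂ ∈ I, ∀ t₃ ∈ I, t₁ ≤ t₂ → t₂ ≤ t₃ →
    dist (γ t₂) (γ t₃) ≤ dist (γ t₁) (γ t₃)

/-- A curve is rectifiable if the sums of consecutive distances along increasing
finite sequences of parameters are uniformly bounded. -/
def Rectifiable {X : Type*} [MetricSpace X] (γ : ℝ → X) (I : Set ℝ) : Prop :=
  ∃ M : ℝ, ∀ (k : ℕ) (t : Fin (k + 1) → ℝ), (∀ i, t i ∈ I) → StrictMono t →
    ∑ i : Fin k, dist (γ (t i.castSucc)) (γ (t i.succ)) ≤ M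

/-! Let `x` be a self-contracted sequence and `f` an antitone real weight. A finite index set is
called a *weighted SRA set* if its points satisfy a strong ordered form of `SRA(α)` and moreover
`f p - f q ≤ α * d(x p, x q)` for `p < q`. By induction on `k`, a stretch of the sequence without
weighted SRA sets of cardinality `k` has length at most `C` times its size, the size being the
larger of the diameter and the drop of `f`. A rectifiability bound follows on taking `f = 0`.

The weight drives the induction: a weighted SRA set for `f + d(·, x r)` whose size is small
compared with its distance to `x r` remains one, for `f`, after adding the later index `r`. Hence in
the absence of such sets of cardinality `k + 1`, a *heavy* interval, one long compared with its
size, controls the future: the sequence can move away from it only by an amount paid for by the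
drop of `f`. On the other hand, a stretch without heavy intervals is short, since it splits into
boundedly many blocks of small size: many blocks would yield many separated points, from which
Ramsey's theorem extracts points at nearly equal mutual distances, and these form a weighted SRA
set. Cutting the sequence at successive heavy intervals gives pieces whose lengths sum up
geometrically. -/

section Ramsey

variable (ι : Type*) {κ : Type*} [LinearOrder ι]

theorem exists_endHomogeneous_subset {K : Finset κ} (hK : K.Nonempty) (n : ℕ) :
    ∃ N : ℕ, ∀ (S : Finset ι) (c : ι → ι → κ), (∀ p ∈ S, ∀ q ∈ S, c p q ∈ K) → N ≤ S.card →
      ∃ T ⊆ S, T.card = n ∧ ∀ p ∈ T, ∃ a ∈ K, ∀ q ∈ T, p < q → c p q = a := by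
  classical
  induction n with
  | zero => exact ⟨0, fun S c _ _ => ⟨∅, by simp⟩⟩
  | succ n ih =>
    obtain ⟨N, hN⟩ := ih
    refine ⟨K.card * N + 1, fun S c hc hS => ?_⟩
    have hne : S.Nonempty := Finset.card_pos.1 (by omega)
    set m := S.min' hne
    have hmS : m ∈ S := S.min'_mem hne
    have hcard : K.card * N ≤ (S.erase m).card := by
      rw [Finset.card_erase_of_mem hmS]
      omega
    obtain ⟨a, haK, ha⟩ := Finset.exists_le_card_fiber_of_mul_le_card_of_maps_to
      (fun q hq => hc m hmS q (Finset.mem_of_mem_erase hq)) hK hcard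
    obtain ⟨T, hTS, hT, hom⟩ := hN _ c (fun p hp q hq => hc p (by grind) q (by grind)) ha
    have hmT : ∀ q ∈ T, m < q ∧ c m q = a := fun q hq =>
      have hq' := Finset.mem_filter.1 (hTS hq)
      ⟨S.min'_lt_of_mem_erase_min' hne hq'.1, hq'.2⟩
    refine ⟨insert m T, by grind, ?_, fun p hp => ?_⟩
    · rw [Finset.card_insert_of_notMem fun h => (hmT m h).1.false, hT]
    · rcases Finset.mem_insert.1 hp with rfl | hp
      · exact ⟨a, haK, by grind⟩
      · obtain ⟨b, hbK, hb⟩ := hom p hp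
        exact ⟨b, hbK, by grind⟩

theorem exists_monochromatic_subset {K : Finset κ} (hK : K.Nonempty) (k : ℕ) :
    ∃ N : ℕ, ∀ (S : Finset ι) (c : ι → ι → κ), (∀ p ∈ S, ∀ q ∈ S, c p q ∈ K) → N ≤ S.card →
      ∃ T ⊆ S, T.card = k ∧ ∃ a, ∀ p ∈ T, ∀ q ∈ T, p < q → c p q = a := by
  classical
  obtain ⟨N, hN⟩ := exists_endHomogeneous_subset ι hK (K.card * k)
  refine ⟨N, fun S c hc hS => ?_⟩
  obtain ⟨T, hTS, hT, hom⟩ := hN S c hc hS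
  have : Nonempty κ := hK.to_type
  choose! color hcolor hom using hom
  obtain ⟨a, -, ha⟩ :=
    Finset.exists_le_card_fiber_of_mul_le_card_of_maps_to hcolor hK hT.ge
  obtain ⟨U, hUT, hU⟩ := Finset.exists_subset_card_eq ha
  exact ⟨U, by grind, hU, a, by grind⟩

theorem exists_subset_forall_sub_le {ε M : ℝ} (hε : 0 < ε) (hM : 0 ≤ M) (k : ℕ) :
    ∃ N : ℕ, ∀ (S : Finset ι) (F : ι → ι → ℝ), (∀ p ∈ S, ∀ q ∈ S, F p q ∈ Set.Icc 0 M) →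
      N ≤ S.card → ∃ T ⊆ S, T.card = k ∧ ∀ p ∈ T, ∀ q ∈ T, ∀ p' ∈ T, ∀ q' ∈ T,
        p < q → p' < q' → F p q - F p' q' ≤ ε := by
  have hK : (Finset.Icc 0 ⌊M / ε⌋).Nonempty :=
    Finset.nonempty_Icc.2 (Int.floor_nonneg.2 (by positivity))
  obtain ⟨N, hN⟩ := exists_monochromatic_subset ι hK k
  refine ⟨N, fun S F hF hS => ?_⟩
  obtain ⟨T, hTS, hT, a, ha⟩ := hN S (fun p q => ⌊F p q / ε⌋) (fun p hp q hq => by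
    obtain ⟨h0, hM⟩ := hF p hp q hq
    exact Finset.mem_Icc.2 ⟨Int.floor_nonneg.2 (by positivity), by gcongr⟩) hS
  refine ⟨T, hTS, hT, fun p hp q hq p' hp' q' hq' hpq hpq' => ?_⟩
  have hlt := (abs_lt.1 (Int.abs_sub_lt_one_of_floor_eq_floor
    ((ha p hp q hq hpq).trans (ha p' hp' q' hq' hpq').symm))).2
  rw [← sub_div, div_lt_one hε] at hlt
  exact hlt.le

end Ramsey

theorem exists_window_sub_le {g : ℕ → ℝ} {θ : ℝ} {R N : ℕ} (hR : 0 < R)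
    (hg : g 0 - g (R * N) ≤ R * θ) : ∃ o, o + N ≤ R * N ∧ g o - g (o + N) ≤ θ := by
  obtain ⟨j, hj, hle⟩ := Finset.exists_le_of_sum_le (s := Finset.range R)
    (f := fun j => g (j * N) - g ((j + 1) * N)) (g := fun _ => θ) (by simpa using hR.ne')
    (by simpa [Finset.sum_range_sub' fun j => g (j * N)] using hg)
  rw [add_one_mul] at hle
  refine ⟨j * N, ?_, hle⟩
  rw [← add_one_mul]
  exact Nat.mul_le_mul_right N (Finset.mem_range.1 hj)


section WeightedSRA

variable {X ι : Type*} [PseudoMetricSpace X] [LinearOrder ι] {α : ℝ} {x : ι → X} {f : ι → ℝ}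
  {T : Finset ι}

/-- The analogue of `SelfContracted` for a family of points indexed by a linear order, used for
finite samples of a curve. -/
def SelfContractedFamily (x : ι → X) : Prop :=
  ∀ ⦃i j k⦄, i ≤ j → j ≤ k → dist (x j) (x k) ≤ dist (x i) (x k)

/-- Weighted SRA sets: the points `x p`, `p ∈ T`, are distinct, satisfy the two instances of
`SRA(α)` that do not follow from self-contractedness, and move fast compared with the drop of the
weight `f`. -/
structure WeightedSRA (α : ℝ) (x : ι → X) (f : ι → ℝ) (T : Finset ι) : Prop where
  dist_pos : ∀ ⦃p⦄, p ∈ T → ∀ ⦃q⦄, q ∈ T → p < q → 0 < dist (x p) (x q)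
  drop_le : ∀ ⦃p⦄, p ∈ T → ∀ ⦃q⦄, q ∈ T → p < q → f p - f q ≤ α * dist (x p) (x q)
  dist_outer_le : ∀ ⦃p⦄, p ∈ T → ∀ ⦃q⦄, q ∈ T → ∀ ⦃r⦄, r ∈ T → p < q → q < r →
    dist (x p) (x r) ≤ dist (x q) (x r) + α * dist (x p) (x q)
  dist_left_le : ∀ ⦃p⦄, p ∈ T → ∀ ⦃q⦄, q ∈ T → ∀ ⦃r⦄, r ∈ T → p < q → q < r →
    dist (x p) (x q) ≤ dist (x p) (x r) + α * dist (x q) (x r)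

namespace WeightedSRA

theorem empty : WeightedSRA α x f ∅ := by
  constructor <;> simp

theorem injOn (hT : WeightedSRA α x f T) : Set.InjOn x T := by
  intro p hp q hq hpq
  by_contra hne
  rcases lt_or_gt_of_ne hne with h | h
  · simpa [hpq] using hT.dist_pos hp hq h
  · simpa [hpq] using hT.dist_pos hq hp h

theorem image [DecidableEq ι] {ι' : Type*} [LinearOrder ι'] {φ : ι' → ι} {T : Finset ι'}
    (hφ : Monotone φ) (hT : WeightedSRA α (x ∘ φ) (f ∘ φ) T) :
    WeightedSRA α x f (T.image φ) := by
  constructor <;> simp only [Finset.forall_mem_image]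
  · exact fun p hp q hq hpq => hT.dist_pos hp hq (hφ.reflect_lt hpq)
  · exact fun p hp q hq hpq => hT.drop_le hp hq (hφ.reflect_lt hpq)
  · exact fun p hp q hq r hr hpq hqr =>
      hT.dist_outer_le hp hq hr (hφ.reflect_lt hpq) (hφ.reflect_lt hqr)
  · exact fun p hp q hq r hr hpq hqr =>
      hT.dist_left_le hp hq hr (hφ.reflect_lt hpq) (hφ.reflect_lt hqr)

theorem of_forall_dist_sub_dist_le {δ ε : ℝ} (hα : 0 ≤ α) (hδ : 0 < δ) (hε : ε ≤ α * δ)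
    (hsep : ∀ p ∈ T, ∀ q ∈ T, p < q → δ ≤ dist (x p) (x q))
    (hdrop : ∀ p ∈ T, ∀ q ∈ T, p < q → f p - f q ≤ ε)
    (hdist : ∀ p ∈ T, ∀ q ∈ T, ∀ p' ∈ T, ∀ q' ∈ T, p < q → p' < q' →
      dist (x p) (x q) - dist (x p') (x q') ≤ ε) :
    WeightedSRA α x f T := by
  have hle : ∀ p ∈ T, ∀ q ∈ T, p < q → ε ≤ α * dist (x p) (x q) := fun p hp q hq hpq =>
    hε.trans (mul_le_mul_of_nonneg_left (hsep p hp q hq hpq) hα)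
  refine ⟨fun p hp q hq hpq => hδ.trans_le (hsep p hp q hq hpq),
    fun p hp q hq hpq => (hdrop p hp q hq hpq).trans (hle p hp q hq hpq),
    fun p hp q hq r hr hpq hqr => ?_, fun p hp q hq r hr hpq hqr => ?_⟩
  · linarith [hdist p hp r hr q hq r hr (hpq.trans hqr) hqr, hle p hp q hq hpq]
  · linarith [hdist p hp q hq p hp r hr hpq (hpq.trans hqr), hle q hq r hr hqr]

theorem insert_of_forall_lt [DecidableEq ι] {r : ι} (hx : SelfContractedFamily x)
    (hf : AntitoneOn f T) (hT : WeightedSRA α x (fun i => f i + dist (x i) (x r)) T)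
    (hr : ∀ p ∈ T, p < r) (hpos : ∀ p ∈ T, 0 < dist (x p) (x r))
    (hdrop : ∀ p ∈ T, f p - f r ≤ α * dist (x p) (x r))
    (hnear : ∀ p ∈ T, ∀ q ∈ T, p < q → dist (x p) (x q) ≤ α * dist (x q) (x r)) :
    WeightedSRA α x f (insert r T) := by
  have hpair : ∀ p ∈ T, ∀ q ∈ T, p < q → f p - f q ≤ α * dist (x p) (x q) ∧
      dist (x p) (x r) ≤ dist (x q) (x r) + α * dist (x p) (x q) := by
    intro p hp q hq hpq
    have hsum := hT.drop_le hp hq hpq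
    have hf_le := hf hp hq hpq.le
    have hdist_le := hx hpq.le (hr q hq).le
    constructor <;> linarith
  have mem_of_lt : ∀ {p q}, p ∈ insert r T → q ∈ insert r T → p < q → p ∈ T := by
    intro p q hp hq hpq
    refine (Finset.mem_insert.1 hp).resolve_left ?_
    rintro rfl
    rcases Finset.mem_insert.1 hq with rfl | hq
    exacts [hpq.false, hpq.asymm (hr q hq)]
  refine ⟨fun p hp q hq hpq => ?_, fun p hp q hq hpq => ?_,
    fun p hp q hq s hs hpq hqs => ?_, fun p hp q hq s hs hpq hqs => ?_⟩
  all_goals have hpT := mem_of_lt hp hq hpq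
  · rcases Finset.mem_insert.1 hq with rfl | hqT
    exacts [hpos p hpT, hT.dist_pos hpT hqT hpq]
  · rcases Finset.mem_insert.1 hq with rfl | hqT
    exacts [hdrop p hpT, (hpair p hpT q hqT hpq).1]
  · have hqT := mem_of_lt hq hs hqs
    rcases Finset.mem_insert.1 hs with rfl | hsT
    exacts [(hpair p hpT q hqT hpq).2, hT.dist_outer_le hpT hqT hsT hpq hqs]
  · have hqT := mem_of_lt hq hs hqs
    rcases Finset.mem_insert.1 hs with rfl | hsT
    exacts [(hnear p hpT q hqT hpq).trans (le_add_of_nonneg_left dist_nonneg),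
      hT.dist_left_le hpT hqT hsT hpq hqs]

end WeightedSRA

theorem WeightedSRA.isSRA {X : Type*} [MetricSpace X] {x : ι → X} (hα : 0 ≤ α)
    (hx : SelfContractedFamily x) (hT : WeightedSRA α x f T) : IsSRA α (x '' T) := by
  have ordered : ∀ i ∈ T, ∀ j ∈ T, ∀ l ∈ T, i < j → dist (x i) (x j) ≤
      max (dist (x i) (x l) + α * dist (x l) (x j)) (α * dist (x i) (x l) + dist (x l) (x j)) := by
    intro i hi j hj l hl hij
    rcases lt_trichotomy l i with hli | rfl | hil
    · refine le_max_of_le_right ((hx hli.le hij.le).trans (le_add_of_nonneg_left ?_))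
      positivity
    · simp
    · rcases lt_trichotomy l j with hlj | rfl | hjl
      · exact le_max_of_le_right (by linarith [hT.dist_outer_le hi hl hj hil hlj])
      · simp
      · exact le_max_of_le_left (dist_comm (x j) (x l) ▸ hT.dist_left_le hi hj hl hij hjl)
  rintro _ ⟨i, hi, rfl⟩ _ ⟨j, hj, rfl⟩ _ ⟨l, hl, rfl⟩
  rcases lt_trichotomy i j with hij | rfl | hji
  · exact ordered i hi j hj l hl hij
  · rw [dist_self]
    exact le_max_of_le_left (by positivity)
  · simpa only [dist_comm, add_comm, max_comm] using ordered j hj i hi l hl hji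

end WeightedSRA

section Sequences

variable {X : Type*} [PseudoMetricSpace X] {α η : ℝ} {x : ℕ → X} {f : ℕ → ℝ} {a b k : ℕ}

/-- Length of the polygonal path through `x a, …, x b`; it is `0` if `b ≤ a`. -/
noncomputable def pathLength (x : ℕ → X) (a b : ℕ) : ℝ :=
  ∑ i ∈ Finset.Ico a b, dist (x i) (x (i + 1))

theorem pathLength_self (x : ℕ → X) (a : ℕ) : pathLength x a a = 0 := by
  simp [pathLength]

theorem pathLength_add_pathLength (x : ℕ → X) {a b c : ℕ} (hab : a ≤ b) (hbc : b ≤ c) :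
    pathLength x a b + pathLength x b c = pathLength x a c :=
  Finset.sum_Ico_consecutive _ hab hbc

theorem pathLength_succ (x : ℕ → X) {a b : ℕ} (hab : a ≤ b) :
    pathLength x a (b + 1) = pathLength x a b + dist (x b) (x (b + 1)) :=
  Finset.sum_Ico_succ_top hab _

/-- Size bound for the stretch `[a, b]`: both its diameter and the drop of the weight across it are
at most `w`. -/
structure SizeLE (x : ℕ → X) (f : ℕ → ℝ) (a b : ℕ) (w : ℝ) : Prop where
  dist_le : ∀ i ∈ Set.Icc a b, ∀ j ∈ Set.Icc a b, dist (x i) (x j) ≤ w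
  drop_le : f a - f b ≤ w

theorem sizeLE_self {w : ℝ} (hw : 0 ≤ w) (a : ℕ) : SizeLE x f a a w := by
  constructor <;> simp [hw]

/-- Existence of a weighted SRA set of `k` indices in `[a, b]`. -/
def HasWeightedSRA (α : ℝ) (x : ℕ → X) (f : ℕ → ℝ) (k a b : ℕ) : Prop :=
  ∃ T ⊆ Finset.Icc a b, T.card = k ∧ WeightedSRA α x f T

theorem HasWeightedSRA.mono {a' b' : ℕ} (h : HasWeightedSRA α x f k a' b') (ha : a ≤ a')
    (hb : b' ≤ b) : HasWeightedSRA α x f k a b :=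
  let ⟨T, hTab, hT⟩ := h
  ⟨T, hTab.trans (Finset.Icc_subset_Icc ha hb), hT⟩

theorem le_dist_of_not_sizeLE {δ : ℝ} {p p' q : ℕ} (hx : SelfContractedFamily x)
    (hsize : ¬ SizeLE x f p p' (2 * δ)) (hdrop : f p - f p' ≤ 2 * δ) (hq : p' ≤ q) :
    δ ≤ dist (x p) (x q) := by
  by_contra! hlt
  refine hsize ⟨fun i hi j hj => ?_, hdrop⟩
  calc dist (x i) (x j) ≤ dist (x i) (x q) + dist (x j) (x q) := dist_triangle_right _ _ _
    _ ≤ dist (x p) (x q) + dist (x p) (x q) :=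
      add_le_add (hx hi.1 (hi.2.trans hq)) (hx hj.1 (hj.2.trans hq))
    _ ≤ 2 * δ := by linarith

theorem exists_forall_window_weightedSRA (X : Type*) [PseudoMetricSpace X] (hα : 0 < α)
    (hη : 0 < η) (k : ℕ) :
    ∃ N : ℕ, ∀ (x : ℕ → X) (f : ℕ → ℝ) (w : ℝ) (c : ℕ → ℕ) (o : ℕ), SelfContractedFamily x →
      0 < w → Monotone c → Antitone (f ∘ c) → (∀ p q, dist (x (c p)) (x (c q)) ≤ w) →
      f (c o) - f (c (o + N)) ≤ min (α * η) (2 * η) * w →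
      (∀ j ∈ Finset.Ico o (o + N), ¬ SizeLE x f (c j) (c (j + 1)) (2 * (η * w))) →
      ∃ T ⊆ Finset.Ico o (o + N), T.card = k ∧ WeightedSRA α (x ∘ c) (f ∘ c) T := by
  set κ := min (α * η) (2 * η)
  obtain ⟨N, hN⟩ := exists_subset_forall_sub_le ℕ (by positivity : 0 < κ) zero_le_one k
  refine ⟨N, fun x f w c o hx hw hc hfc hdist ho hbig => ?_⟩
  obtain ⟨T, hTS, hTk, hT⟩ := hN (Finset.Ico o (o + N)) (fun p q => dist (x (c p)) (x (c q)) / w)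
    (fun p _ q _ => ⟨by positivity, (div_le_one hw).2 (hdist p q)⟩) (by simp)
  have hdrop : ∀ p q, o ≤ p → q ≤ o + N → f (c p) - f (c q) ≤ κ * w := fun p q hp hq =>
    (sub_le_sub (hfc hp) (hfc hq)).trans ho
  have hmem : ∀ p ∈ T, o ≤ p ∧ p < o + N := fun p hp => Finset.mem_Ico.1 (hTS hp)
  have hκα : κ * w ≤ α * (η * w) := by
    rw [← mul_assoc]
    exact mul_le_mul_of_nonneg_right (min_le_left _ _) hw.le
  have hκ2 : κ * w ≤ 2 * (η * w) := by
    rw [← mul_assoc]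
    exact mul_le_mul_of_nonneg_right (min_le_right _ _) hw.le
  refine ⟨T, hTS, hTk, .of_forall_dist_sub_dist_le (δ := η * w) hα.le (by positivity) hκα
    (fun p hp q _ hpq => ?_) (fun p hp q hq _ => hdrop p q (hmem p hp).1 (hmem q hq).2.le)
    (fun p hp q hq p' hp' q' hq' hpq hpq' => ?_)⟩
  · exact le_dist_of_not_sizeLE (x := x) hx (hbig p (hTS hp))
      ((hdrop p (p + 1) (hmem p hp).1 (hmem p hp).2).trans hκ2) (hc hpq)
  · have hsub := hT p hp q hq p' hp' q' hq' hpq hpq'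
    rwa [← sub_div, div_le_iff₀ hw] at hsub

theorem exists_forall_chain_hasWeightedSRA (X : Type*) [PseudoMetricSpace X] (hα : 0 < α)
    (hη : 0 < η) (k : ℕ) :
    ∃ m : ℕ, ∀ (x : ℕ → X) (f : ℕ → ℝ) (a b : ℕ) (w : ℝ) (c : ℕ → ℕ), SelfContractedFamily x →
      AntitoneOn f (Set.Icc a b) → 0 < w → SizeLE x f a b w → Monotone c →
      (∀ j, c j ∈ Set.Icc a b) → (∀ j < m, ¬ SizeLE x f (c j) (c (j + 1)) (2 * (η * w))) →
      HasWeightedSRA α x f k a b := by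
  obtain ⟨N, hN⟩ := exists_forall_window_weightedSRA X hα hη k
  have hκ : 0 < min (α * η) (2 * η) := by positivity
  obtain ⟨R, hR⟩ := exists_nat_gt (1 / min (α * η) (2 * η))
  have hR0 : 0 < R := Nat.cast_pos.1 ((one_div_pos.2 hκ).trans hR)
  refine ⟨R * N, fun x f a b w c hx hf hw hsize hc hcab hbig => ?_⟩
  have hdrop : f (c 0) - f (c (R * N)) ≤ R * (min (α * η) (2 * η) * w) := by
    have hab : a ≤ b := (hcab 0).1.trans (hcab 0).2
    calc f (c 0) - f (c (R * N)) ≤ f a - f b :=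
          sub_le_sub (hf ⟨le_rfl, hab⟩ (hcab _) (hcab _).1) (hf (hcab _) ⟨hab, le_rfl⟩ (hcab _).2)
      _ ≤ 1 * w := by linarith [hsize.drop_le]
      _ ≤ (R * min (α * η) (2 * η)) * w :=
          mul_le_mul_of_nonneg_right ((div_lt_iff₀ hκ).1 hR).le hw.le
      _ = R * (min (α * η) (2 * η) * w) := mul_assoc _ _ _
  obtain ⟨o, hoN, ho⟩ := exists_window_sub_le (g := f ∘ c) hR0 hdrop
  obtain ⟨T, -, hTk, hT⟩ := hN x f w c o hx hw hc
    (fun i j hij => hf (hcab i) (hcab j) (hc hij))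
    (fun p q => hsize.dist_le _ (hcab p) _ (hcab q)) ho
    (fun j hj => hbig j ((Finset.mem_Ico.1 hj).2.trans_le hoN))
  refine ⟨T.image c, ?_, ?_, hT.image hc⟩
  · exact Finset.image_subset_iff.2 fun p _ => Finset.mem_Icc.2 (hcab p)
  · rw [Finset.card_image_of_injOn hT.injOn.of_comp, hTk]

theorem exists_and_not_succ {P : ℕ → Prop} (hab : a ≤ b) (ha : P a) (hb : ¬ P b) :
    ∃ e, a ≤ e ∧ e < b ∧ P e ∧ ¬ P (e + 1) := by
  by_contra! h
  exact hb (Nat.le_induction (P := fun e _ => e ≤ b → P e) (fun _ => ha)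
    (fun e hae ih heb => h e hae heb (ih (e.le_succ.trans heb))) b hab le_rfl)

theorem pathLength_le_or_exists_chain {P : ℕ → ℕ → Prop} {B w : ℝ} (hP : ∀ c, P c c) (hw : 0 ≤ w)
    (hab : a ≤ b) (hstep : ∀ i, a ≤ i → i < b → dist (x i) (x (i + 1)) ≤ w)
    (hlen : ∀ c d, a ≤ c → c ≤ d → d ≤ b → P c d → pathLength x c d ≤ B) (m : ℕ) :
    pathLength x a b ≤ m * (B + w) ∨ ∃ c : ℕ → ℕ, Monotone c ∧ c 0 = a ∧ (∀ j, c j ≤ b) ∧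
      ∀ j < m, ¬ P (c j) (c (j + 1)) := by
  have hB : 0 ≤ B := by simpa [pathLength_self] using hlen a a le_rfl le_rfl hab (hP a)
  induction m generalizing a with
  | zero => exact .inr ⟨fun _ => a, monotone_const, rfl, fun _ => hab, by simp⟩
  | succ m ih =>
    push_cast
    have hm : 0 ≤ m * (B + w) := by positivity
    by_cases hPab : P a b
    · exact .inl (by linarith [hlen a b le_rfl hab le_rfl hPab])
    obtain ⟨e, hae, heb, hPe, hPe'⟩ := exists_and_not_succ (P := P a) hab (hP a) hPab
    rcases ih (a := e + 1) heb (fun i hi => hstep i (by omega))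
        (fun c d hc => hlen c d (by omega)) with hle | ⟨c, hc, hc0, hcb, hPc⟩
    · left
      have hae_len := hlen a e le_rfl hae heb.le hPe
      have he_len := hstep e hae heb
      rw [← pathLength_add_pathLength x (hae.trans e.le_succ) heb, pathLength_succ x hae]
      linarith
    · refine .inr ⟨fun | 0 => a | j + 1 => c j, monotone_nat_of_le_succ ?_, rfl, ?_, ?_⟩
      · rintro (_ | j)
        exacts [(hae.trans e.le_succ).trans_eq hc0.symm, hc j.le_succ]
      · rintro (_ | j)
        exacts [hab, hcb j]
      · rintro (_ | j) hj
        exacts [by simpa only [hc0] using hPe', hPc j (Nat.lt_of_succ_lt_succ hj)]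

theorem exists_pathLength_le_of_forall_sizeLE (X : Type*) [PseudoMetricSpace X] (hα : 0 < α)
    (hη : 0 < η) (k : ℕ) :
    ∃ m : ℕ, ∀ (x : ℕ → X) (f : ℕ → ℝ) (a b : ℕ) (w B : ℝ), SelfContractedFamily x → a ≤ b →
      0 < w → AntitoneOn f (Set.Icc a b) → SizeLE x f a b w → ¬ HasWeightedSRA α x f k a b →
      (∀ c d, a ≤ c → c ≤ d → d ≤ b → SizeLE x f c d (η * w) → pathLength x c d ≤ B) →
      pathLength x a b ≤ m * (B + w) := by
  obtain ⟨m, hm⟩ := exists_forall_chain_hasWeightedSRA X hα (half_pos hη) k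
  refine ⟨m, fun x f a b w B hx hab hw hf hsize hno hlen => ?_⟩
  have hstep : ∀ i, a ≤ i → i < b → dist (x i) (x (i + 1)) ≤ w := fun i hai hib =>
    hsize.dist_le _ ⟨hai, hib.le⟩ _ ⟨hai.trans i.le_succ, hib⟩
  refine (pathLength_le_or_exists_chain (P := fun c d => SizeLE x f c d (η * w))
    (sizeLE_self (by positivity)) hw.le hab hstep hlen m).resolve_right ?_
  rintro ⟨c, hc, hc0, hcb, hbig⟩
  refine hno (hm x f a b w c hx hf hw hsize hc
    (fun j => ⟨hc0 ▸ hc j.zero_le, hcb j⟩) fun j hj => ?_)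
  rw [← mul_assoc, mul_div_cancel₀ η two_ne_zero]
  exact hbig j hj

/-- `C` times the size bounds the length of every stretch of a self-contracted sequence in `X` that
has no weighted SRA set of cardinality `k`, whatever the antitone weight. -/
def IsLengthBound (X : Type*) [PseudoMetricSpace X] (α : ℝ) (k : ℕ) (C : ℝ) : Prop :=
  ∀ (x : ℕ → X) (f : ℕ → ℝ) (a b : ℕ) (w : ℝ), SelfContractedFamily x → a ≤ b → 0 < w →
    AntitoneOn f (Set.Icc a b) → SizeLE x f a b w → ¬ HasWeightedSRA α x f k a b →
    pathLength x a b ≤ C * w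

/-- Control of the future of the index `a` up to `b`: the sequence moves away from `x a` only by an
amount paid for by the drop of the weight, up to the budget `u`. -/
def DriftLE (α : ℝ) (x : ℕ → X) (f : ℕ → ℝ) (a b : ℕ) (u : ℝ) : Prop :=
  ∀ r ∈ Set.Icc a b, α * dist (x a) (x r) ≤ u + (f a - f r)

theorem SizeLE.driftLE {w : ℝ} (hα : 0 ≤ α) (hf : AntitoneOn f (Set.Icc a b))
    (hsize : SizeLE x f a b w) : DriftLE α x f a b (α * w) := fun r hr =>
  have ha : a ∈ Set.Icc a b := ⟨le_rfl, hr.1.trans hr.2⟩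
  (mul_le_mul_of_nonneg_left (hsize.dist_le a ha r hr) hα).trans
    (le_add_of_nonneg_right (sub_nonneg.2 (hf ha hr hr.1)))

theorem SizeLE.add_dist {w : ℝ} (hab : a ≤ b) (hsize : SizeLE x f a b w) (z : X) :
    SizeLE x (fun i => f i + dist (x i) z) a b (2 * w) := by
  have hdist := hsize.dist_le a ⟨le_rfl, hab⟩ b ⟨hab, le_rfl⟩
  have htri := dist_triangle (x a) (x b) z
  have hdrop := hsize.drop_le
  refine ⟨fun i hi j hj => ?_, by linarith⟩
  linarith [hsize.dist_le i hi j hj, dist_nonneg (x := x a) (y := x b)]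

theorem DriftLE.sizeLE {u : ℝ} {e : ℕ} (hα : 0 < α) (hf : AntitoneOn f (Set.Icc a b))
    (hu : 0 ≤ u) (h : DriftLE α x f a b u) (hae : a ≤ e) (heb : e ≤ b) :
    SizeLE x f a e ((2 / α + 1) * (u + (f a - f e))) := by
  have hs : 0 ≤ f a - f e := sub_nonneg.2 (hf ⟨le_rfl, hae.trans heb⟩ ⟨hae, heb⟩ hae)
  have hdist : ∀ i ∈ Set.Icc a e, dist (x a) (x i) ≤ (u + (f a - f e)) / α := fun i hi => by
    rw [le_div_iff₀' hα]
    linarith [h i ⟨hi.1, hi.2.trans heb⟩, hf ⟨hi.1, hi.2.trans heb⟩ ⟨hae, heb⟩ hi.2]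
  have hexpand : (2 / α + 1) * (u + (f a - f e)) =
      (u + (f a - f e)) / α + (u + (f a - f e)) / α + (u + (f a - f e)) := by ring
  have hdiv : 0 ≤ (u + (f a - f e)) / α := by positivity
  refine ⟨fun i hi j hj => ?_, by linarith⟩
  linarith [dist_triangle_left (x i) (x j) (x a), hdist i hi, hdist j hj]

theorem DriftLE.advance {v : ℝ} {d e : ℕ} (hα : 0 ≤ α) (h : DriftLE α x f d b v) (hde : d ≤ e)
    (heb : e ≤ b) : DriftLE α x f e b (2 * v + 2 * (f d - f e)) := fun r hr => by
  calc α * dist (x e) (x r) ≤ α * dist (x d) (x e) + α * dist (x d) (x r) := by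
        rw [← mul_add]
        exact mul_le_mul_of_nonneg_left (dist_triangle_left _ _ _) hα
    _ ≤ (v + (f d - f e)) + (v + (f d - f r)) :=
        add_le_add (h e ⟨hde, heb⟩) (h r ⟨hde.trans hr.1, hr.2⟩)
    _ = 2 * v + 2 * (f d - f e) + (f e - f r) := by ring

theorem HasWeightedSRA.succ_of_lt_dist {v : ℝ} {c d r : ℕ} (hα : 0 < α)
    (hx : SelfContractedFamily x) (hf : AntitoneOn f (Set.Icc c d)) (hcd : c ≤ d) (hdr : d < r)
    (hsize : SizeLE x f c d v) (hdrop : f r ≤ f d)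
    (hfar : v + (f d - f r) < α * dist (x d) (x r))
    (h : HasWeightedSRA α x (fun i => f i + dist (x i) (x r)) k c d) :
    HasWeightedSRA α x f (k + 1) c r := by
  obtain ⟨T, hTcd, hTk, hT⟩ := h
  have hmem : ∀ p ∈ T, p ∈ Set.Icc c d := fun p hp => Finset.mem_Icc.1 (hTcd hp)
  have hlt : ∀ p ∈ T, p < r := fun p hp => (hmem p hp).2.trans_lt hdr
  have hdist : ∀ p ∈ T, α * dist (x d) (x r) ≤ α * dist (x p) (x r) := fun p hp =>
    mul_le_mul_of_nonneg_left (hx (hmem p hp).2 hdr.le) hα.le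
  have hv : 0 ≤ v := dist_self (x c) ▸ hsize.dist_le c ⟨le_rfl, hcd⟩ c ⟨le_rfl, hcd⟩
  refine ⟨insert r T, ?_, ?_, hT.insert_of_forall_lt hx (hf.mono hmem) hlt (fun p hp => ?_)
    (fun p hp => ?_) fun p hp q hq _ => ?_⟩
  · refine Finset.insert_subset (Finset.mem_Icc.2 ⟨hcd.trans hdr.le, le_rfl⟩) ?_
    exact hTcd.trans (Finset.Icc_subset_Icc_right hdr.le)
  · rw [Finset.card_insert_of_notMem fun hr => (hlt r hr).false, hTk]
  · exact pos_of_mul_pos_right (by linarith [hdist p hp]) hα.le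
  · linarith [hdist p hp, hsize.drop_le, hf ⟨le_rfl, hcd⟩ (hmem p hp) (hmem p hp).1]
  · linarith [hdist q hq, hsize.dist_le p (hmem p hp) q (hmem q hq)]

theorem IsLengthBound.driftLE_of_lt_pathLength {C v : ℝ} {c d : ℕ} (hC : IsLengthBound X α k C)
    (hα : 0 < α) (hx : SelfContractedFamily x) (hf : AntitoneOn f (Set.Icc c b)) (hcd : c ≤ d)
    (hdb : d ≤ b) (hno : ¬ HasWeightedSRA α x f (k + 1) c b) (hv : 0 < v)
    (hsize : SizeLE x f c d v) (hheavy : C * (2 * v) < pathLength x c d) :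
    DriftLE α x f d b v := by
  intro r ⟨hdr, hrb⟩
  by_contra! hfar
  rcases hdr.eq_or_lt with rfl | hdr
  · simp only [sub_self, add_zero, dist_self, mul_zero] at hfar
    exact hfar.not_gt hv
  have hfcd : AntitoneOn f (Set.Icc c d) := hf.mono (Set.Icc_subset_Icc_right hdb)
  have hdist : AntitoneOn (fun i => dist (x i) (x r)) (Set.Icc c d) :=
    fun i _ j hj hij => hx hij (hj.2.trans hdr.le)
  have hhas : HasWeightedSRA α x (fun i => f i + dist (x i) (x r)) k c d := by
    by_contra hno'
    exact hheavy.not_ge (hC x _ c d (2 * v) hx hcd (by positivity) (hfcd.add hdist)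
      (hsize.add_dist hcd (x r)) hno')
  have hdrop : f r ≤ f d := hf ⟨hcd, hdb⟩ ⟨hcd.trans hdr.le, hrb⟩ hdr.le
  exact hno ((hhas.succ_of_lt_dist hα hx hfcd hcd hdr hsize hdrop hfar).mono le_rfl hrb)

/-- No stretch of size at most `v` inside `[a, b]` is heavy, i.e. longer than `2Cv`. The factor `2`
is the growth of the size when a distance function is added to the weight. -/
def IsLight (x : ℕ → X) (f : ℕ → ℝ) (C v : ℝ) (a b : ℕ) : Prop :=
  ∀ c d, a ≤ c → c ≤ d → d ≤ b → SizeLE x f c d v → pathLength x c d ≤ C * (2 * v)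

theorem isLight_self {C v : ℝ} (hC : 0 ≤ C) (hv : 0 ≤ v) (a : ℕ) : IsLight x f C v a a := by
  intro c d hac hcd hda _
  obtain rfl : c = d := by omega
  rw [pathLength_self]
  positivity

theorem exists_pathLength_le_of_isLight (X : Type*) [PseudoMetricSpace X] {C : ℝ} (hα : 0 < α)
    (hC : 0 ≤ C) (k : ℕ) :
    ∃ L : ℝ, 0 ≤ L ∧ ∀ (x : ℕ → X) (f : ℕ → ℝ) (a b : ℕ) (u : ℝ), SelfContractedFamily x →
      AntitoneOn f (Set.Icc a b) → ¬ HasWeightedSRA α x f k a b → a ≤ b → 0 < u →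
      DriftLE α x f a b u → IsLight x f C ((u + (f a - f b)) / 8) a b →
      pathLength x a b ≤ L * (u + (f a - f b)) := by
  set K := 2 / α + 1
  have hK : 0 < K := by positivity
  obtain ⟨m, hm⟩ := exists_pathLength_le_of_forall_sizeLE X (η := 1 / (8 * K)) hα (by positivity) k
  refine ⟨m * (C / 4 + K), by positivity, fun x f a b u hx hf hno hab hu hdrift hlight => ?_⟩
  have hs : 0 < u + (f a - f b) := by linarith [hf ⟨le_rfl, hab⟩ ⟨hab, le_rfl⟩ hab]
  have hη : 1 / (8 * K) * (K * (u + (f a - f b))) = (u + (f a - f b)) / 8 := by field_simp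
  have hle := hm x f a b (K * (u + (f a - f b))) (C * (2 * ((u + (f a - f b)) / 8))) hx hab
    (by positivity) hf (hdrift.sizeLE hα hf hu.le hab le_rfl) hno (hη.symm ▸ hlight)
  linarith

theorem IsLengthBound.driftLE_of_not_isLight {C u : ℝ} {e : ℕ} (hC : IsLengthBound X α k C)
    (hα : 0 < α) (hx : SelfContractedFamily x) (hf : AntitoneOn f (Set.Icc a b))
    (hno : ¬ HasWeightedSRA α x f (k + 1) a b) (hu : 0 < u) (hae : a ≤ e) (heb : e ≤ b)
    (hlight : ¬ IsLight x f C ((u + (f a - f e)) / 8) a e) :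
    DriftLE α x f e b (u / 4 + 9 / 4 * (f a - f e)) := by
  simp only [IsLight, not_forall, not_le] at hlight
  obtain ⟨c, d, hac, hcd, hde, hsize, hheavy⟩ := hlight
  have hab := hae.trans heb
  have hfae : f e ≤ f a := hf ⟨le_rfl, hab⟩ ⟨hae, heb⟩ hae
  have hfad : f d ≤ f a := hf ⟨le_rfl, hab⟩ ⟨hac.trans hcd, hde.trans heb⟩ (hac.trans hcd)
  have hdrift := hC.driftLE_of_lt_pathLength hα hx (hf.mono (Set.Icc_subset_Icc_left hac)) hcd
    (hde.trans heb) (fun h => hno (h.mono hac le_rfl)) (by linarith) hsize hheavy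
  intro r hr
  linarith [hdrift.advance hα.le hde heb r hr]

theorem IsLengthBound.exists_pathLength_le_or_driftLE {C : ℝ} (hα : 0 < α) (hC0 : 0 ≤ C)
    (hC : IsLengthBound X α k C) :
    ∃ L : ℝ, 0 ≤ L ∧ ∀ (x : ℕ → X) (f : ℕ → ℝ) (a b : ℕ) (u : ℝ), SelfContractedFamily x →
      AntitoneOn f (Set.Icc a b) → ¬ HasWeightedSRA α x f (k + 1) a b → a ≤ b → 0 < u →
      DriftLE α x f a b u →
      pathLength x a b ≤ L * (u + (f a - f b)) ∨
      ∃ e, a < e ∧ e ≤ b ∧ pathLength x a e ≤ L * (u + (f a - f e)) ∧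
        DriftLE α x f e b (u / 4 + 9 / 4 * (f a - f e)) := by
  obtain ⟨L, hL, hlen⟩ := exists_pathLength_le_of_isLight X hα hC0 (k + 1)
  refine ⟨L + (2 / α + 1), by positivity, fun x f a b u hx hf hno hab hu hdrift => ?_⟩
  have hfa : ∀ {e}, a ≤ e → e ≤ b → f e ≤ f a := fun hae heb =>
    hf ⟨le_rfl, hab⟩ ⟨hae, heb⟩ hae
  have light_le : ∀ {e}, a ≤ e → e ≤ b → IsLight x f C ((u + (f a - f e)) / 8) a e →
      pathLength x a e ≤ L * (u + (f a - f e)) := fun {e} hae heb =>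
    hlen x f a e u hx (hf.mono (Set.Icc_subset_Icc_right heb)) (fun h => hno (h.mono le_rfl heb))
      hae hu fun r hr => hdrift r ⟨hr.1, hr.2.trans heb⟩
  by_cases hlight : IsLight x f C ((u + (f a - f b)) / 8) a b
  · left
    refine (light_le hab le_rfl hlight).trans (mul_le_mul_of_nonneg_right ?_ ?_)
    · exact le_add_of_nonneg_right (by positivity)
    · linarith [hfa hab le_rfl]
  obtain ⟨e, hae, heb, hlight_e, hlight_succ⟩ :=
    exists_and_not_succ (P := fun e => IsLight x f C ((u + (f a - f e)) / 8) a e) hab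
      (isLight_self hC0 (by linarith) a) hlight
  have hae' : a ≤ e + 1 := hae.trans e.le_succ
  refine .inr ⟨e + 1, Nat.lt_succ_of_le hae, heb, ?_,
    hC.driftLE_of_not_isLight hα hx hf hno hu hae' heb hlight_succ⟩
  have hfe : f (e + 1) ≤ f e := hf ⟨hae, heb.le⟩ ⟨hae', heb⟩ e.le_succ
  calc pathLength x a (e + 1) = pathLength x a e + dist (x e) (x (e + 1)) := pathLength_succ x hae
    _ ≤ L * (u + (f a - f (e + 1))) + (2 / α + 1) * (u + (f a - f (e + 1))) := by
        refine add_le_add ((light_le hae heb.le hlight_e).trans ?_) ?_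
        · exact mul_le_mul_of_nonneg_left (by linarith) hL
        · exact (hdrift.sizeLE hα hf hu.le hae' heb).dist_le _ ⟨hae, e.le_succ⟩ _ ⟨hae', le_rfl⟩
    _ = (L + (2 / α + 1)) * (u + (f a - f (e + 1))) := (add_mul _ _ _).symm

theorem pathLength_le_of_driftLE {L u : ℝ} (hL : 0 ≤ L) (hf : AntitoneOn f (Set.Icc a b))
    (hstep : ∀ a' ∈ Set.Icc a b, ∀ u, 0 < u → DriftLE α x f a' b u →
      pathLength x a' b ≤ L * (u + (f a' - f b)) ∨
      ∃ e, a' < e ∧ e ≤ b ∧ pathLength x a' e ≤ L * (u + (f a' - f e)) ∧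
        DriftLE α x f e b (u / 4 + 9 / 4 * (f a' - f e)))
    (hab : a ≤ b) (hu : 0 < u) (hdrift : DriftLE α x f a b u) :
    pathLength x a b ≤ 2 * L * (u + 3 * (f a - f b)) := by
  induction h : b - a using Nat.strong_induction_on generalizing a u with
  | _ n ih =>
  have hfab : 0 ≤ f a - f b := sub_nonneg.2 (hf ⟨le_rfl, hab⟩ ⟨hab, le_rfl⟩ hab)
  rcases hstep a ⟨le_rfl, hab⟩ u hu hdrift with hle | ⟨e, hae, heb, hle, hdrift'⟩
  · refine hle.trans ?_
    rw [mul_assoc, mul_left_comm]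
    exact mul_le_mul_of_nonneg_left (by linarith) hL
  · have hfae : 0 ≤ f a - f e := sub_nonneg.2 (hf ⟨le_rfl, hab⟩ ⟨hae.le, heb⟩ hae.le)
    have hsub : Set.Icc e b ⊆ Set.Icc a b := Set.Icc_subset_Icc_left hae.le
    have hrest := ih (b - e) (by omega) (hf.mono hsub) (fun a' ha' => hstep a' (hsub ha')) heb
      (by positivity) hdrift' rfl
    rw [← pathLength_add_pathLength x hae.le heb]
    calc pathLength x a e + pathLength x e b
        ≤ L * (u + (f a - f e)) +
          2 * L * (u / 4 + 9 / 4 * (f a - f e) + 3 * (f e - f b)) := add_le_add hle hrest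
      _ = L * (3 / 2 * u + 11 / 2 * (f a - f e) + 6 * (f e - f b)) := by ring
      _ ≤ L * (2 * (u + 3 * (f a - f b))) := mul_le_mul_of_nonneg_left (by linarith) hL
      _ = 2 * L * (u + 3 * (f a - f b)) := by ring

theorem IsLengthBound.exists_succ {C : ℝ} (hα : 0 < α) (hC0 : 0 ≤ C) (hC : IsLengthBound X α k C) :
    ∃ D : ℝ, 0 ≤ D ∧ IsLengthBound X α (k + 1) D := by
  obtain ⟨L, hL, hstep⟩ := hC.exists_pathLength_le_or_driftLE hα hC0
  refine ⟨2 * L * (α + 3), by positivity, fun x f a b w hx hab hw hf hsize hno => ?_⟩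
  calc pathLength x a b ≤ 2 * L * (α * w + 3 * (f a - f b)) :=
        pathLength_le_of_driftLE hL hf
          (fun a' ha' u => hstep x f a' b u hx (hf.mono (Set.Icc_subset_Icc_left ha'.1))
            (fun h => hno (h.mono ha'.1 le_rfl)) ha'.2)
          hab (by positivity) (hsize.driftLE hα.le hf)
    _ ≤ 2 * L * (α * w + 3 * w) := by
        have := hsize.drop_le
        gcongr
    _ = 2 * L * (α + 3) * w := by ring

theorem exists_isLengthBound (X : Type*) [PseudoMetricSpace X] (hα : 0 < α) (k : ℕ) :
    ∃ C : ℝ, 0 ≤ C ∧ IsLengthBound X α k C := by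
  induction k with
  | zero =>
    exact ⟨0, le_rfl, fun x f a b w _ _ _ _ _ hno =>
      absurd ⟨∅, Finset.empty_subset _, rfl, WeightedSRA.empty⟩ hno⟩
  | succ k ih =>
    obtain ⟨C, hC0, hC⟩ := ih
    exact hC.exists_succ hα hC0

end Sequences

theorem SelfContracted.selfContractedFamily_comp {X ι : Type*} [MetricSpace X] [LinearOrder ι]
    {γ : ℝ → X} {I : Set ℝ} {t : ι → ℝ} (hγ : SelfContracted γ I) (ht : Monotone t)
    (htI : ∀ i, t i ∈ I) : SelfContractedFamily (γ ∘ t) := fun i j k hij hjk =>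
  hγ _ (htI i) _ (htI j) _ (htI k) (ht hij) (ht hjk)

theorem rectifiable_of_forall_pathLength_le {X : Type*} [MetricSpace X] {γ : ℝ → X} {I : Set ℝ}
    {M : ℝ} (h : ∀ t : ℕ → ℝ, Monotone t → (∀ i, t i ∈ I) → ∀ n, pathLength (γ ∘ t) 0 n ≤ M) :
    Rectifiable γ I := by
  refine ⟨M, fun n t htI ht => ?_⟩
  have hclamp : Monotone fun i => Fin.clamp i n := fun i j hij =>
    Fin.le_def.2 (min_le_min_right n hij)
  refine le_of_eq_of_le ?_ (h (fun i => t (Fin.clamp i n)) (ht.monotone.comp hclamp)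
    (fun i => htI _) n)
  rw [pathLength, ← Finset.range_eq_Ico, ← Fin.sum_univ_eq_sum_range]
  refine Finset.sum_congr rfl fun i _ => ?_
  have hcast : Fin.clamp i n = i.castSucc := Fin.ext (by simp)
  have hsucc : Fin.clamp (i + 1) n = i.succ := Fin.ext (by simp)
  simp only [Function.comp_apply, hcast, hsucc]

theorem sra_subsets_in_selfContracted_unrectifiable_general {X : Type*} [MetricSpace X]
    (γ : ℝ → X) (I : Set ℝ) (hbdd : Bornology.IsBounded (γ '' I)) (hsc : SelfContracted γ I)
    (hur : ¬ Rectifiable γ I) (α : ℝ) (hα : 0 < α) (k : ℕ) :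
    ∃ Y : Finset X, ↑Y ⊆ γ '' I ∧ Y.card = k ∧ IsSRA α (↑Y : Set X) := by
  classical
  obtain ⟨C, -, hC⟩ := exists_isLengthBound X hα k
  obtain ⟨w, hw⟩ := Metric.isBounded_iff.1 hbdd
  by_contra hno
  refine hur (rectifiable_of_forall_pathLength_le (M := C * max w 1) fun t ht htI n => ?_)
  have hx := hsc.selfContractedFamily_comp ht htI
  have hmem : ∀ i, (γ ∘ t) i ∈ γ '' I := fun i => Set.mem_image_of_mem γ (htI i)
  have hsize : SizeLE (γ ∘ t) (fun _ => 0) 0 n (max w 1) :=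
    ⟨fun i _ j _ => (hw (hmem i) (hmem j)).trans (le_max_left w 1), by simp⟩
  refine hC _ _ 0 n _ hx n.zero_le (by positivity) antitoneOn_const hsize ?_
  rintro ⟨T, -, hTk, hT⟩
  refine hno ⟨T.image (γ ∘ t), ?_, by rw [Finset.card_image_of_injOn hT.injOn, hTk], ?_⟩
  · rw [Finset.coe_image]
    exact Set.image_subset_iff.2 fun i _ => hmem i
  · simpa only [Finset.coe_image] using hT.isSRA hα.le hx

/-- If a metric space admits a bounded, self-contracted, and unrectifiable curve
`γ : I → X`, then for every `1/2 < α < 1` and every `k ∈ ℕ` there is a `k`-point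
subset of `γ(I)` satisfying the `SRA(α)` condition. -/
theorem sra_subsets_in_selfContracted_unrectifiable
    {X : Type*} [MetricSpace X] (γ : ℝ → X) (I : Set ℝ)
    (hI : I.OrdConnected)
    (hbdd : Bornology.IsBounded (γ '' I))
    (hsc : SelfContracted γ I)
    (hur : ¬ Rectifiable γ I) :
    ∀ α : ℝ, 1 / 2 < α → α < 1 → ∀ k : ℕ,
      ∃ Y : Finset X, ↑Y ⊆ γ '' I ∧ Y.card = k ∧ IsSRA α (↑Y : Set X) := by
  intro α hα _ k
  exact sra_subsets_in_selfContracted_unrectifiable_general γ I hbdd hsc hur α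
    (one_half_pos.trans hα) k
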